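/- arXiv:1605.07939 — 2 statements merged into one kernel-verified Lean document; each statement's English description precedes it below -/
import Mathlib

section
/- In a decomposable space 𝒳 of measurable ℝ^d-valued functions with respect to a σ-finite measure μ, if the infimum of ∫ h(x) dμ over x ∈ 𝒳 is finite for a normal integrand h, then inf_{x∈𝒳} ∫ h_t(x_t) dμ = ∫ inf_{x∈ℝ^d} h_t(x) dμ. -/
open MeasureTheory Set
open scoped ENNReal

/-- Positive part of an extended real, as an `ℝ≥0∞`. -/
noncomputable def epos (e : EReal) : ℝ≥0∞ := if e = ⊤ then ⊤ else ENNReal.ofReal e.toReal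

/-- The integral of an `EReal`-valued function, with the convention that it is `+∞`
unless the positive part is integrable. -/
noncomputable def eIntegral {α : Type*} [MeasurableSpace α] (μ : Measure α)
    (g : α → EReal) : EReal :=
  if (∫⁻ a, epos (g a) ∂μ) = ⊤ then ⊤
  else ((∫⁻ a, epos (g a) ∂μ : ℝ≥0∞) : EReal) - ((∫⁻ a, epos (-(g a)) ∂μ : ℝ≥0∞) : EReal)

/-- A set of measurable functions is decomposable if it is stable under replacing a
function by a bounded measurable one on a measurable set of finite measure. -/
def Decomposable {α : Type*} [MeasurableSpace α] (μ : Measure α) {d : ℕ}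
    (𝒳 : Set (α → Fin d → ℝ)) : Prop :=
  ∀ x ∈ 𝒳, ∀ x' : α → Fin d → ℝ, Measurable x' → (∃ C : ℝ, ∀ a, ‖x' a‖ ≤ C) →
    ∀ A : Set α, MeasurableSet A → μ A < ⊤ →
      (fun a => A.indicator x' a + Aᶜ.indicator x a) ∈ 𝒳

/-!
If `c` exceeds `∫ inf h`, truncating the negative part of `inf h` gives an integrable `u > inf h`
with `∫ u < c`. A measurable selection `y` with `h(y) < u` is then spliced into some `x ∈ 𝒳` with
`∫ h(x) < ∞`, on large sets of finite measure where `y` is bounded, and dominated convergence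
yields a `z ∈ 𝒳` with `∫ h(z) < c`.

The selection rests on analytic sets being null-measurable: projections to `α` of measurable
subsets of `α × E` are then null-measurable too, so `inf h` is a.e. measurable. A measurable subset
of `α × E` is moreover the image, over `α`, of a measurable subset of `α × (ℕ → ℕ)` with closed
sections, where a point of each section is found one coordinate at a time.
-/

open Filter Topology

theorem exists_seq_forall_inter_biInter_lt {Z β : Type*} {P : Set Z → Prop} {c : ℕ → β → Set Z}
    {S : Set Z} (hS : P S) (hstep : ∀ k T, P T → ∃ b, P (T ∩ c k b)) :
    ∃ b : ℕ → β, ∀ k, P (S ∩ ⋂ i < k, c i (b i)) := by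
  obtain ⟨b₀, -⟩ := hstep 0 S hS
  have : Nonempty β := ⟨b₀⟩
  choose! b hb using hstep
  let T : ℕ → Set Z := fun k => Nat.rec S (fun k T => T ∩ c k (b k T)) k
  have hT : ∀ k, P (T k) := fun k => Nat.rec hS (fun k ih => hb k _ ih) k
  have hT_eq : ∀ k, T k = S ∩ ⋂ i < k, c i (b i (T i)) := fun k => by
    induction k with
    | zero => simp [T]
    | succ k ih =>
      rw [biInter_lt_succ, ← inter_assoc, ← ih]
  exact ⟨fun k => b k (T k), fun k => hT_eq k ▸ hT k⟩

section AnalyticSet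

theorem isCompact_Iic_of_orderBot {β : Type*} [TopologicalSpace β] [Preorder β] [OrderBot β]
    [CompactIccSpace β] (b : β) : IsCompact (Iic b) :=
  Icc_bot (a := b) ▸ isCompact_Icc

theorem exists_pi_Iic_subset_of_isOpen {n : ℕ → ℕ} {W : Set (ℕ → ℕ)} (hW : IsOpen W)
    (hnW : Iic n ⊆ W) : ∃ k, ((Iio k).pi fun i => Iic (n i)) ⊆ W := by
  by_contra! hcon
  choose σ hσ hσW using fun k => not_subset.1 (hcon k)
  obtain ⟨τ, hτ, φ, hφ, hlim⟩ := (isCompact_Iic_of_orderBot n).tendsto_subseq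
    (x := fun k => σ k ⊓ n) fun k => mem_Iic.2 inf_le_right
  have hlim' : Tendsto (σ ∘ φ) atTop (𝓝 τ) := by
    rw [tendsto_pi_nhds] at hlim ⊢
    intro i
    refine (hlim i).congr' ?_
    filter_upwards [eventually_gt_atTop i] with k hk
    exact min_eq_left (hσ _ _ (hk.trans_le hφ.le_apply))
  obtain ⟨k, hk⟩ := (hlim'.eventually (hW.mem_nhds (hnW hτ))).exists
  exact hσW _ hk

theorem iInter_closure_image_pi_Iic_subset {X : Type*} [TopologicalSpace X] [T2Space X]
    {g : (ℕ → ℕ) → X} (hg : Continuous g) (n : ℕ → ℕ) :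
    ⋂ k, closure (g '' (Iio k).pi fun i => Iic (n i)) ⊆ g '' Iic n := by
  intro y hy
  by_contra hyn
  obtain ⟨U, V, hU, hV, hnU, hyV, hUV⟩ := SeparatedNhds.of_isCompact_isCompact
    ((isCompact_Iic_of_orderBot n).image hg) isCompact_singleton
    (disjoint_singleton_right.2 hyn)
  obtain ⟨k, hk⟩ := exists_pi_Iic_subset_of_isOpen (hU.preimage hg) (image_subset_iff.1 hnU)
  obtain ⟨z, hzV, hz⟩ := mem_closure_iff.1 (mem_iInter.1 hy k) V hV (hyV rfl)
  exact hUV.le_bot ⟨image_subset_iff.2 hk hz, hzV⟩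

variable {X : Type*} [MeasurableSpace X] {μ : Measure X} {g : (ℕ → ℕ) → X} {t : ℝ≥0∞}

-- Every subset counts here, measurable or not: continuity from below holds for outer measures.
theorem exists_lt_measure_image_inter_preimage_Iic {S : Set (ℕ → ℕ)} (ht : t < μ (g '' S))
    (k : ℕ) : ∃ m, t < μ (g '' (S ∩ {σ | σ k ≤ m})) := by
  have hunion : g '' S = ⋃ m, g '' (S ∩ {σ | σ k ≤ m}) := by
    rw [← image_iUnion, ← inter_iUnion, iUnion_eq_univ_iff.2 fun σ => ⟨σ k, le_refl (σ k)⟩,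
      inter_univ]
  have hdir : Directed (· ⊆ ·) fun m => g '' (S ∩ {σ | σ k ≤ m}) :=
    Monotone.directed_le fun a b hab => image_mono
      (inter_subset_inter_right _ fun σ (hσ : σ k ≤ a) => hσ.trans hab)
  rwa [hunion, hdir.measure_iUnion, lt_iSup_iff] at ht

theorem exists_forall_lt_measure_image_pi_Iic (ht : t < μ (range g)) :
    ∃ n : ℕ → ℕ, ∀ k, t < μ (g '' (Iio k).pi fun i => Iic (n i)) := by
  obtain ⟨n, hn⟩ := exists_seq_forall_inter_biInter_lt
    (P := fun S => t < μ (g '' S)) (c := fun k m => {σ | σ k ≤ m}) (S := univ)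
    (by rwa [image_univ]) fun k S hS => exists_lt_measure_image_inter_preimage_Iic hS k
  refine ⟨n, fun k => ?_⟩
  convert hn k using 3
  ext σ
  simp

theorem exists_isCompact_le_measure_image [TopologicalSpace X] [T2Space X]
    [OpensMeasurableSpace X] [IsFiniteMeasure μ] (hg : Continuous g) (ht : t < μ (range g)) :
    ∃ K : Set (ℕ → ℕ), IsCompact K ∧ t ≤ μ (g '' K) := by
  obtain ⟨n, hn⟩ := exists_forall_lt_measure_image_pi_Iic ht
  refine ⟨Iic n, isCompact_Iic_of_orderBot n, ?_⟩
  have hanti : Antitone fun k => closure (g '' (Iio k).pi fun i => Iic (n i)) := fun k l hkl =>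
    closure_mono (image_mono fun σ hσ i hi => hσ i (hi.trans_le hkl))
  calc t ≤ ⨅ k, μ (closure (g '' (Iio k).pi fun i => Iic (n i))) :=
        le_iInf fun k => (hn k).le.trans (measure_mono subset_closure)
    _ = μ (⋂ k, closure (g '' (Iio k).pi fun i => Iic (n i))) :=
        (hanti.measure_iInter (fun k => isClosed_closure.measurableSet.nullMeasurableSet)
          ⟨0, measure_ne_top _ _⟩).symm
    _ ≤ μ (g '' Iic n) := measure_mono (iInter_closure_image_pi_Iic_subset hg n)

theorem nullMeasurableSet_of_analyticSet [TopologicalSpace X] [T2Space X]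
    [OpensMeasurableSpace X] [SFinite μ] {A : Set X} (hA : AnalyticSet A) :
    NullMeasurableSet A μ := by
  suffices h : NullMeasurableSet A μ.toFinite from h.mono_ac (absolutelyContinuous_toFinite μ)
  rw [AnalyticSet] at hA
  obtain rfl | ⟨g, hg, rfl⟩ := hA
  · exact .empty
  rcases eq_zero_or_pos (μ.toFinite (range g)) with hzero | hpos
  · exact .of_null hzero
  obtain ⟨t, -, ht, hlim⟩ := exists_seq_strictMono_tendsto' hpos
  choose K hK htK using fun j => exists_isCompact_le_measure_image hg (ht j).2
  have hmeas : NullMeasurableSet (⋃ j, g '' K j) μ.toFinite :=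
    .iUnion fun j => ((hK j).image hg).measurableSet.nullMeasurableSet
  refine hmeas.congr (ae_eq_of_subset_of_measure_ge
    (iUnion_subset fun j => image_subset_range _ _) ?_ hmeas (measure_ne_top _ _))
  exact le_of_tendsto' hlim fun j =>
    (htK j).trans (measure_mono (subset_iUnion (fun j => g '' K j) j))

end AnalyticSet

section Selection

variable {α E : Type*} [MeasurableSpace α] [MeasurableSpace E]

-- Only countably many measurable subsets of `α` enter the construction of `G`, so the arbitrary
-- measurable space `α` can be replaced by Cantor space.
theorem exists_measurableSet_eq_preimage_prodMap {G : Set (α × E)} (hG : MeasurableSet G) :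
    ∃ (f : α → ℕ → Bool) (G' : Set ((ℕ → Bool) × E)), Measurable f ∧ MeasurableSet G' ∧
      G = Prod.map f id ⁻¹' G' := by
  classical
  induction G, hG using MeasurableSpace.induction_on_inter generateFrom_prod.symm
    isPiSystem_prod with
  | empty => exact ⟨fun _ _ => true, ∅, measurable_const, .empty, by simp⟩
  | basic t ht =>
    obtain ⟨A, hA, B, hB, rfl⟩ := ht
    refine ⟨fun a _ => decide (a ∈ A), ((fun x : ℕ → Bool => x 0) ⁻¹' {true}) ×ˢ B, ?_, ?_, ?_⟩
    · refine measurable_pi_lambda _ fun _ => measurable_to_bool ?_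
      simpa [preimage] using hA
    · exact ((measurable_pi_apply 0) (measurableSet_singleton _)).prod hB
    · ext; simp
  | compl t _ ih =>
    obtain ⟨f, G', hf, hG', rfl⟩ := ih
    exact ⟨f, G'ᶜ, hf, hG'.compl, rfl⟩
  | iUnion t _ _ ih =>
    choose f G' hf hG' h using ih
    refine ⟨fun a k => f k.unpair.1 a k.unpair.2,
      ⋃ n, Prod.map (fun x k => x (Nat.pair n k)) id ⁻¹' G' n, ?_, ?_, ?_⟩
    · exact measurable_pi_lambda _ fun k => (measurable_pi_apply _).comp (hf _)
    · refine .iUnion fun n => ?_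
      have : Measurable fun (x : ℕ → Bool) k => x (Nat.pair n k) :=
        measurable_pi_lambda _ fun k => measurable_pi_apply _
      exact (this.prodMap measurable_id) (hG' n)
    · ext p
      simp [h, Prod.map]

variable [StandardBorelSpace E] {μ : Measure α} [SFinite μ]

theorem nullMeasurableSet_image_fst {G : Set (α × E)} (hG : MeasurableSet G) :
    NullMeasurableSet (Prod.fst '' G) μ := by
  obtain ⟨f, G', hf, hG', rfl⟩ := exists_measurableSet_eq_preimage_prodMap hG
  have hproj : NullMeasurableSet (Prod.fst '' G') (μ.map f) :=
    nullMeasurableSet_of_analyticSet (hG'.analyticSet_image measurable_fst)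
  convert hproj.preimage (hf.measurePreserving μ).quasiMeasurePreserving using 1
  ext a
  simp

theorem aemeasurable_iInf_of_measurable_uncurry {F : α → E → EReal}
    (hF : Measurable (Function.uncurry F)) : AEMeasurable (fun a => ⨅ y, F a y) μ := by
  have hIio : ∀ c, NullMeasurableSet ((fun a => ⨅ y, F a y) ⁻¹' Iio c) μ := fun c => by
    convert nullMeasurableSet_image_fst (μ := μ) (hF (measurableSet_Iio (a := c))) using 1
    ext a
    simp [iInf_lt_iff]
  exact NullMeasurable.aemeasurable (measurable_of_Iio (δ := NullMeasurableSpace α μ) hIio)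

theorem exists_measurable_nat_ae_mem_image_fst {G : Set (α × E)} (hG : MeasurableSet G)
    {l : E → ℕ} (hl : Measurable l) :
    ∃ m : α → ℕ, Measurable m ∧
      ∀ᵐ a ∂μ, a ∈ Prod.fst '' G → a ∈ Prod.fst '' (G ∩ {p | l p.2 = m p.1}) := by
  have hproj : ∀ k, NullMeasurableSet (Prod.fst '' (G ∩ {p | l p.2 = k})) μ := fun k =>
    nullMeasurableSet_image_fst
      (hG.inter (measurableSet_eq_fun (hl.comp measurable_snd) measurable_const))
  choose B hBsub hB hBae using fun k => (hproj k).exists_measurable_subset_ae_eq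
  obtain ⟨m, hm, hmB⟩ := exists_measurable_piecewise (disjointed B)
    (fun k => MeasurableSet.disjointed hB k) (fun k _ => k) (fun _ => measurable_const)
    fun i j hij => by simp [(disjoint_disjointed B hij).inter_eq]
  refine ⟨m, hm, ?_⟩
  filter_upwards [ae_all_iff.2 fun k => (hBae k).mem_iff] with a ha
  rintro ⟨p, hp, rfl⟩
  have hmem : p.1 ∈ ⋃ k, disjointed B k := by
    rw [iUnion_disjointed]
    exact mem_iUnion.2 ⟨l p.2, (ha _).2 ⟨p, ⟨hp, rfl⟩, rfl⟩⟩
  obtain ⟨k, hk⟩ := mem_iUnion.1 hmem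
  obtain ⟨q, ⟨hqG, hqk⟩, hqp⟩ := hBsub k (disjointed_subset B k hk)
  exact ⟨q, ⟨hqG, hqk.trans (by rw [hqp, hmB k hk])⟩, hqp⟩

theorem exists_measurable_ae_mem_of_isClosed {G : Set (α × (ℕ → ℕ))} (hG : MeasurableSet G)
    (hclosed : ∀ a, IsClosed {σ | (a, σ) ∈ G}) :
    ∃ s : α → ℕ → ℕ, Measurable s ∧ ∀ᵐ a ∂μ, a ∈ Prod.fst '' G → (a, s a) ∈ G := by
  obtain ⟨m, hm⟩ := exists_seq_forall_inter_biInter_lt (β := {m : α → ℕ // Measurable m})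
    (P := fun T => MeasurableSet T ∧ ∀ᵐ a ∂μ, a ∈ Prod.fst '' G → a ∈ Prod.fst '' T)
    (c := fun k m => {p : α × (ℕ → ℕ) | p.2 k = m.1 p.1}) (S := G) ⟨hG, ae_of_all _ fun _ => id⟩
    (by
      rintro k T ⟨hT, hGT⟩
      obtain ⟨m, hm, hTm⟩ :=
        exists_measurable_nat_ae_mem_image_fst (μ := μ) hT (measurable_pi_apply k)
      refine ⟨⟨m, hm⟩, hT.inter (measurableSet_eq_fun (by fun_prop) (hm.comp measurable_fst)), ?_⟩
      filter_upwards [hGT, hTm] with a h₁ h₂ using h₂ ∘ h₁)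
  refine ⟨fun a k => (m k).1 a, measurable_pi_lambda _ fun k => (m k).2, ?_⟩
  filter_upwards [ae_all_iff.2 fun k => (hm k).2] with a ha haG
  choose p hp hpa using fun k => ha k haG
  have hlim : Tendsto (fun k => (p k).2) atTop (𝓝 fun k => (m k).1 a) := by
    refine tendsto_pi_nhds.2 fun i => tendsto_nhds_of_eventually_eq ?_
    filter_upwards [eventually_gt_atTop i] with k hik
    exact hpa k ▸ mem_iInter₂.1 (hp k).2 i hik
  have hpG : ∀ k, (a, (p k).2) ∈ G := fun k => hpa k ▸ (hp k).1
  exact (hclosed a).mem_of_tendsto hlim (Eventually.of_forall hpG)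

theorem exists_measurable_ae_mem [Nonempty E] {G : Set (α × E)} (hG : MeasurableSet G) :
    ∃ y : α → E, Measurable y ∧ ∀ᵐ a ∂μ, a ∈ Prod.fst '' G → (a, y a) ∈ G := by
  obtain ⟨f, G', hf, hG', rfl⟩ := exists_measurableSet_eq_preimage_prodMap hG
  let := upgradeStandardBorel E
  have : PolishSpace (ℕ → Bool) := {}
  have hG'an := hG'.analyticSet
  rw [AnalyticSet] at hG'an
  obtain rfl | ⟨g, hg, rfl⟩ := hG'an
  · exact ⟨fun _ => Classical.arbitrary E, measurable_const, by simp⟩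
  obtain ⟨s, hs, hsG⟩ := exists_measurable_ae_mem_of_isClosed (μ := μ)
    (G := {p | (g p.2).1 = f p.1})
    (measurableSet_eq_fun (hg.measurable.fst.comp measurable_snd) (hf.comp measurable_fst))
    fun a => isClosed_eq (g := fun _ => f a) hg.fst continuous_const
  refine ⟨fun a => (g (s a)).2, hg.measurable.snd.comp hs, hsG.mono ?_⟩
  rintro a ha ⟨⟨_, z⟩, ⟨σ, hσ⟩, rfl⟩
  exact ⟨s _, Prod.ext (ha ⟨(_, σ), congrArg Prod.fst hσ, rfl⟩) rfl⟩

theorem exists_measurable_ae_lt [Nonempty E] {F : α → E → EReal}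
    (hF : Measurable (Function.uncurry F)) {β : α → EReal} (hβ : AEMeasurable β μ)
    (hlt : ∀ᵐ a ∂μ, ⨅ y, F a y < β a) :
    ∃ y : α → E, Measurable y ∧ ∀ᵐ a ∂μ, F a (y a) < β a := by
  obtain ⟨y, hy, hyG⟩ := exists_measurable_ae_mem (μ := μ)
    (G := {p : α × E | F p.1 p.2 < hβ.mk β p.1})
    (measurableSet_lt hF (hβ.measurable_mk.comp measurable_fst))
  refine ⟨y, hy, ?_⟩
  filter_upwards [hyG, hlt, hβ.ae_eq_mk] with a hya ha hmk
  obtain ⟨z, hz⟩ := iInf_lt_iff.1 ha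
  rw [hmk] at hz ⊢
  exact hya ⟨(a, z), hz, rfl⟩

end Selection

section Integral

variable {α : Type*} [MeasurableSpace α] {μ : Measure α} {f g : α → EReal}

theorem eIntegral_of_ne_top (hf : ∫⁻ a, (f a).toENNReal ∂μ ≠ ⊤) :
    eIntegral μ f = ((∫⁻ a, (f a).toENNReal ∂μ : ℝ≥0∞) : EReal) -
      ((∫⁻ a, (-f a).toENNReal ∂μ : ℝ≥0∞) : EReal) :=
  if_neg hf

theorem lintegral_toENNReal_ne_top (hf : eIntegral μ f ≠ ⊤) :
    ∫⁻ a, (f a).toENNReal ∂μ ≠ ⊤ :=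
  fun h => hf (if_pos h)

theorem eIntegral_mono_ae (hfg : f ≤ᵐ[μ] g) : eIntegral μ f ≤ eIntegral μ g := by
  by_cases hg : ∫⁻ a, (g a).toENNReal ∂μ = ⊤
  · exact le_top.trans_eq (if_pos hg).symm
  have hpos : ∫⁻ a, (f a).toENNReal ∂μ ≤ ∫⁻ a, (g a).toENNReal ∂μ :=
    lintegral_mono_ae (hfg.mono fun _ ha => EReal.toENNReal_le_toENNReal ha)
  have hneg : ∫⁻ a, (-g a).toENNReal ∂μ ≤ ∫⁻ a, (-f a).toENNReal ∂μ :=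
    lintegral_mono_ae (hfg.mono fun _ ha =>
      EReal.toENNReal_le_toENNReal (EReal.neg_le_neg_iff.2 ha))
  rw [eIntegral_of_ne_top hg, eIntegral_of_ne_top (ne_top_of_le_ne_top hg hpos)]
  exact EReal.sub_le_sub (mod_cast hpos) (mod_cast hneg)

theorem coe_integral_toReal_sub_toReal {p q : α → ℝ≥0∞} (hp : AEMeasurable p μ)
    (hq : AEMeasurable q μ) (hp' : ∫⁻ a, p a ∂μ ≠ ⊤) (hq' : ∫⁻ a, q a ∂μ ≠ ⊤) :
    ((∫ a, ((p a).toReal - (q a).toReal) ∂μ : ℝ) : EReal) =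
      ((∫⁻ a, p a ∂μ : ℝ≥0∞) : EReal) - ((∫⁻ a, q a ∂μ : ℝ≥0∞) : EReal) := by
  rw [integral_sub (integrable_toReal_of_lintegral_ne_top hp hp')
    (integrable_toReal_of_lintegral_ne_top hq hq'), integral_toReal hp (ae_lt_top' hp hp'),
    integral_toReal hq (ae_lt_top' hq hq'), EReal.coe_sub, EReal.coe_ennreal_toReal hp',
    EReal.coe_ennreal_toReal hq']

theorem eIntegral_coe {f : α → ℝ} (hf : Integrable f μ) :
    eIntegral μ (fun a => (f a : EReal)) = ((∫ a, f a ∂μ : ℝ) : EReal) := by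
  have hpos : ∫⁻ a, ENNReal.ofReal (f a) ∂μ ≠ ⊤ := hf.lintegral_lt_top.ne
  have hneg : ∫⁻ a, ENNReal.ofReal (-f a) ∂μ ≠ ⊤ := hf.neg.lintegral_lt_top.ne
  rw [eIntegral_of_ne_top (by simpa using hpos)]
  simp only [← EReal.coe_neg, EReal.real_coe_toENNReal]
  rw [integral_eq_lintegral_pos_part_sub_lintegral_neg_part hf, EReal.coe_sub,
    EReal.coe_ennreal_toReal hpos, EReal.coe_ennreal_toReal hneg]

theorem le_coe_toReal_toENNReal_sub {x : EReal} (hx : x ≠ ⊤) {q : ℝ≥0∞}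
    (hq : q ≤ (-x).toENNReal) : x ≤ ((x.toENNReal.toReal - q.toReal : ℝ) : EReal) := by
  induction x with
  | bot => exact bot_le
  | top => exact absurd rfl hx
  | coe r =>
    rw [← EReal.coe_neg, EReal.real_coe_toENNReal] at hq
    have hq' : q.toReal ≤ max (-r) 0 :=
      (ENNReal.toReal_mono ENNReal.ofReal_ne_top hq).trans_eq ENNReal.toReal_ofReal'
    rw [EReal.real_coe_toENNReal, ENNReal.toReal_ofReal', EReal.coe_le_coe_iff]
    linarith [max_zero_sub_max_neg_zero_eq_self r]

theorem tendsto_lintegral_min_nat_mul {p w : α → ℝ≥0∞} (hp : AEMeasurable p μ)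
    (hw : AEMeasurable w μ) (hw0 : ∀ a, w a ≠ 0) :
    Tendsto (fun n : ℕ => ∫⁻ a, min (p a) (n * w a) ∂μ) atTop (𝓝 (∫⁻ a, p a ∂μ)) := by
  refine lintegral_tendsto_of_tendsto_of_monotone (fun n => hp.min (hw.const_mul _))
    (ae_of_all _ fun a i j hij =>
      min_le_min_left _ (mul_le_mul_left (Nat.cast_le.2 hij) _)) (ae_of_all _ fun a => ?_)
  have hlim : Tendsto (fun n : ℕ => (n : ℝ≥0∞) * w a) atTop (𝓝 ⊤) := by
    simpa [ENNReal.top_mul (hw0 a)] using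
      ENNReal.Tendsto.mul_const (b := w a) ENNReal.tendsto_nat_nhds_top (.inl ENNReal.top_ne_zero)
  simpa using tendsto_const_nhds.min hlim

theorem tendsto_integral_piecewise {u v : α → ℝ} (hu : Integrable u μ) (hv : Integrable v μ)
    {A : ℕ → Set α} (hA : ∀ n, MeasurableSet (A n)) (hev : ∀ a, ∀ᶠ n in atTop, a ∈ A n)
    [∀ n, DecidablePred (· ∈ A n)] :
    Tendsto (fun n => ∫ a, (A n).piecewise u v a ∂μ) atTop (𝓝 (∫ a, u a ∂μ)) := by
  refine tendsto_integral_of_dominated_convergence (fun a => ‖u a‖ + ‖v a‖)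
    (fun n => (Integrable.piecewise (hA n) hu.integrableOn hv.integrableOn).aestronglyMeasurable)
    (hu.norm.add hv.norm) (fun n => ae_of_all _ fun a => ?_) (ae_of_all _ fun a => ?_)
  · by_cases h : a ∈ A n <;> simp [h]
  · refine tendsto_const_nhds.congr' ?_
    filter_upwards [hev a] with n hn
    simp [hn]

variable [SigmaFinite μ]

theorem exists_integrable_ge_of_eIntegral_lt (hf : AEMeasurable f μ) {c : ℝ}
    (hc : eIntegral μ f < c) :
    ∃ β : α → ℝ, Integrable β μ ∧ ∫ a, β a ∂μ < c ∧ ∀ᵐ a ∂μ, f a ≤ β a := by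
  have hpos := lintegral_toENNReal_ne_top hc.ne_top
  have hposm : AEMeasurable (fun a => (f a).toENNReal) μ := hf.ereal_toENNReal
  have hnegm : AEMeasurable (fun a => (-f a).toENNReal) μ := hf.neg.ereal_toENNReal
  obtain ⟨w, hw0, hwm, hw⟩ := exists_pos_lintegral_lt_of_sigmaFinite μ one_ne_zero
  have hlim : Tendsto (fun n : ℕ => ((∫⁻ a, (f a).toENNReal ∂μ : ℝ≥0∞) : EReal) -
      ((∫⁻ a, min (-f a).toENNReal (n * w a) ∂μ : ℝ≥0∞) : EReal)) atTop (𝓝 (eIntegral μ f)) := by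
    rw [eIntegral_of_ne_top hpos]
    have hneglim := tendsto_lintegral_min_nat_mul hnegm hwm.coe_nnreal_ennreal.aemeasurable
      fun a => by simpa using (hw0 a).ne'
    exact (EReal.continuousAt_add (.inl (EReal.coe_ennreal_eq_top_iff.not.2 hpos))
      (.inl (EReal.coe_ennreal_ne_bot _))).tendsto.comp
      (tendsto_const_nhds.prodMk_nhds
        ((continuous_neg.comp continuous_coe_ennreal_ereal).tendsto _ |>.comp hneglim))
  obtain ⟨n, hn⟩ := (hlim.eventually_lt_const hc).exists
  let q : α → ℝ≥0∞ := fun a => min (-f a).toENNReal (n * w a)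
  have hqm : AEMeasurable q μ := hnegm.min (by fun_prop)
  have hq : ∫⁻ a, q a ∂μ ≠ ⊤ := by
    refine ((lintegral_mono fun a => min_le_right _ _).trans_lt ?_).ne
    rw [lintegral_const_mul _ hwm.coe_nnreal_ennreal]
    exact ENNReal.mul_lt_top (by simp) (hw.trans ENNReal.one_lt_top)
  refine ⟨fun a => (f a).toENNReal.toReal - (q a).toReal,
    (integrable_toReal_of_lintegral_ne_top hposm hpos).sub
      (integrable_toReal_of_lintegral_ne_top hqm hq), ?_, ?_⟩
  · rwa [← EReal.coe_lt_coe_iff, coe_integral_toReal_sub_toReal hposm hqm hpos hq]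
  · filter_upwards [ae_lt_top' hposm hpos] with a ha
    exact le_coe_toReal_toENNReal_sub (EReal.toENNReal_ne_top_iff.1 ha.ne) (min_le_left _ _)

theorem exists_integrable_pos_integral_lt (μ : Measure α) [SigmaFinite μ] {ε : ℝ} (hε : 0 < ε) :
    ∃ w : α → ℝ, (∀ a, 0 < w a) ∧ Integrable w μ ∧ ∫ a, w a ∂μ < ε := by
  obtain ⟨w, hw0, hwm, hw⟩ := exists_pos_lintegral_lt_of_sigmaFinite μ
    (ENNReal.ofReal_pos.2 hε).ne'
  have hwi : Integrable (fun a => (w a : ℝ)) μ :=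
    integrable_toReal_of_lintegral_ne_top hwm.coe_nnreal_ennreal.aemeasurable hw.ne_top
  refine ⟨fun a => w a, hw0, hwi, ?_⟩
  rwa [lintegral_coe_eq_integral _ hwi, ENNReal.ofReal_lt_ofReal_iff hε] at hw

theorem exists_integrable_gt_of_eIntegral_lt (hf : AEMeasurable f μ) {c : ℝ}
    (hc : eIntegral μ f < c) :
    ∃ β : α → ℝ, Integrable β μ ∧ ∫ a, β a ∂μ < c ∧ ∀ᵐ a ∂μ, f a < β a := by
  obtain ⟨β, hβ, hβc, hfβ⟩ := exists_integrable_ge_of_eIntegral_lt hf hc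
  obtain ⟨w, hw0, hw, hwc⟩ := exists_integrable_pos_integral_lt μ (sub_pos.2 hβc)
  refine ⟨fun a => β a + w a, hβ.add hw, ?_, hfβ.mono fun a ha => ha.trans_lt ?_⟩
  · rw [integral_add hβ hw]
    linarith
  · exact EReal.coe_lt_coe_iff.2 (lt_add_of_pos_right _ (hw0 a))

end Integral

section Interchange

variable {α E : Type*} [MeasurableSpace α] [NormedAddCommGroup E] [MeasurableSpace E]

/-- `Decomposable` for functions with values in an arbitrary normed group; `Decomposable` is the
case `E = Fin d → ℝ`, definitionally. -/
def IsDecomposable (μ : Measure α) (𝒳 : Set (α → E)) : Prop :=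
  ∀ x ∈ 𝒳, ∀ x' : α → E, Measurable x' → (∃ C : ℝ, ∀ a, ‖x' a‖ ≤ C) →
    ∀ A : Set α, MeasurableSet A → μ A < ⊤ →
      (fun a => A.indicator x' a + Aᶜ.indicator x a) ∈ 𝒳

variable [OpensMeasurableSpace E]

theorem exists_seq_measurableSet_norm_le (μ : Measure α) [SigmaFinite μ] {y : α → E}
    (hy : Measurable y) :
    ∃ A : ℕ → Set α, (∀ n, MeasurableSet (A n) ∧ μ (A n) < ⊤ ∧ ∀ a ∈ A n, ‖y a‖ ≤ n) ∧
      ∀ a, ∀ᶠ n in atTop, a ∈ A n := by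
  refine ⟨fun n => {a | ‖y a‖ ≤ n} ∩ spanningSets μ n, fun n => ⟨?_, ?_, fun a ha => ha.1⟩,
    fun a => ?_⟩
  · exact (measurableSet_le hy.norm measurable_const).inter (measurableSet_spanningSets μ n)
  · exact (measure_mono inter_subset_right).trans_lt (measure_spanningSets_lt_top μ n)
  · obtain ⟨k, hk⟩ := exists_nat_ge ‖y a‖
    filter_upwards [eventually_ge_atTop k, eventually_ge_atTop (spanningSetsIndex μ a)]
      with n hkn hn
    exact ⟨hk.trans (Nat.cast_le.2 hkn), mem_spanningSets_of_index_le μ a hn⟩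

variable {μ : Measure α} [SigmaFinite μ] {𝒳 : Set (α → E)} {h : α → E → EReal}

theorem IsDecomposable.exists_eIntegral_lt (h𝒳 : IsDecomposable μ 𝒳) {x y : α → E} {u v : α → ℝ}
    (hx : x ∈ 𝒳) (hv : Integrable v μ) (hxv : ∀ᵐ a ∂μ, h a (x a) ≤ v a)
    (hy : Measurable y) (hu : Integrable u μ) (hyu : ∀ᵐ a ∂μ, h a (y a) ≤ u a)
    {c : ℝ} (hc : ∫ a, u a ∂μ < c) :
    ∃ z ∈ 𝒳, eIntegral μ (fun a => h a (z a)) < c := by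
  classical
  obtain ⟨A, hA, hev⟩ := exists_seq_measurableSet_norm_le μ hy
  obtain ⟨n, hn⟩ := ((tendsto_integral_piecewise hu hv (fun n => (hA n).1) hev).eventually_lt_const
    hc).exists
  obtain ⟨hAm, hAμ, hAy⟩ := hA n
  have hbdd : ∀ a, ‖(A n).indicator y a‖ ≤ n := fun a => by
    by_cases ha : a ∈ A n
    · simpa [ha] using hAy a ha
    · simp [ha]
  refine ⟨_, h𝒳 x hx _ (hy.indicator hAm) ⟨n, hbdd⟩ (A n) hAm hAμ, ?_⟩
  calc eIntegral μ (fun a => h a ((A n).indicator ((A n).indicator y) a + (A n)ᶜ.indicator x a))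
      ≤ eIntegral μ (fun a => ((A n).piecewise u v a : EReal)) := by
        refine eIntegral_mono_ae ?_
        filter_upwards [hxv, hyu] with a hxa hya
        by_cases ha : a ∈ A n <;> simpa [ha]
    _ = ((∫ a, (A n).piecewise u v a ∂μ : ℝ) : EReal) :=
        eIntegral_coe (Integrable.piecewise hAm hu.integrableOn hv.integrableOn)
    _ < c := EReal.coe_lt_coe_iff.2 hn

variable [StandardBorelSpace E]

theorem interchange_rule_decomposable_general (hmeas : Measurable (Function.uncurry h))
    (h𝒳meas : ∀ x ∈ 𝒳, Measurable x) (h𝒳 : IsDecomposable μ 𝒳)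
    (hne_top : ⨅ x : 𝒳, eIntegral μ (fun a => h a ((x : α → E) a)) ≠ ⊤) :
    ⨅ x : 𝒳, eIntegral μ (fun a => h a ((x : α → E) a)) =
      eIntegral μ (fun a => ⨅ y : E, h a y) := by
  refine le_antisymm ?_ (le_iInf fun x => eIntegral_mono_ae (ae_of_all _ fun a => iInf_le _ _))
  obtain ⟨⟨x, hx⟩, hxtop⟩ := iInf_lt_iff.1 hne_top.lt_top
  obtain ⟨_, hxb, -⟩ := EReal.lt_iff_exists_real_btwn.1 hxtop
  obtain ⟨v, hv, -, hxv⟩ := exists_integrable_ge_of_eIntegral_lt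
    (hmeas.comp (measurable_id.prodMk (h𝒳meas x hx))).aemeasurable hxb
  refine EReal.le_of_forall_lt_iff_le.1 fun c hc => ?_
  obtain ⟨u, hu, huc, hinfu⟩ :=
    exists_integrable_gt_of_eIntegral_lt (aemeasurable_iInf_of_measurable_uncurry hmeas) hc
  obtain ⟨y, hy, hyu⟩ :=
    exists_measurable_ae_lt hmeas hu.aestronglyMeasurable.aemeasurable.coe_real_ereal hinfu
  obtain ⟨z, hz, hzc⟩ :=
    h𝒳.exists_eIntegral_lt hx hv hxv hy hu (hyu.mono fun _ => le_of_lt) huc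
  exact (iInf_le _ (⟨z, hz⟩ : 𝒳)).trans hzc.le

end Interchange

/-- The classical interchange rule (Rockafellar): over a decomposable space `𝒳`,
if `inf_{x ∈ 𝒳} ∫ h(x) dμ` is finite then it equals `∫ inf_{y ∈ ℝ^d} h(y) dμ`. -/
theorem interchange_rule_decomposable
    {α : Type*} [MeasurableSpace α] (μ : Measure α) [SigmaFinite μ]
    {d : ℕ} (h : α → (Fin d → ℝ) → EReal)
    -- h is a normal integrand
    (hlsc : ∀ a, LowerSemicontinuous (h a))
    (hmeas : Measurable (Function.uncurry h))
    (𝒳 : Set (α → Fin d → ℝ))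
    (h𝒳meas : ∀ x ∈ 𝒳, Measurable x)
    (h𝒳 : Decomposable μ 𝒳)
    (hfin : ∃ r : ℝ, (⨅ x : 𝒳, eIntegral μ (fun a => h a ((x : α → Fin d → ℝ) a))) = (r : EReal)) :
    (⨅ x : 𝒳, eIntegral μ (fun a => h a ((x : α → Fin d → ℝ) a))) =
      eIntegral μ (fun a => ⨅ y : Fin d → ℝ, h a y) := by
  obtain ⟨r, hr⟩ := hfin
  exact interchange_rule_decomposable_general hmeas h𝒳meas h𝒳 (hr ▸ EReal.coe_ne_top r)
end

section
/- Let f be a closed proper convex function on ℝ^d, θ a finite ℝ^d-valued Radon measure on [0,T], and μ a positive finite measure. With θ = θ^a + θ^s the Lebesgue decomposition of θ with respect to μ, the functional J_f(θ) = ∫ f(dθ^a/dμ) dμ + ∫ f^∞(dθ^s/d|θ^s|) d|θ^s| is well defined (independent of the choice of densities) and convex in θ. -/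
open MeasureTheory Set
open scoped ENNReal

/-- The recession function of `f` based at `u₀`. -/
noncomputable def recFun {E : Type*} [AddCommMonoid E] [SMul ℝ E]
    (f : E → EReal) (u₀ u : E) : EReal :=
  ⨆ α : {a : ℝ // 0 < a}, (f (u₀ + (α : ℝ) • u) - f u₀) * (((α : ℝ)⁻¹ : ℝ) : EReal)

/-- `(g, σ, e)` represents the Lebesgue decomposition of the vector measure `θ` with
respect to `μ`: `g` is the density of `θᵃ`, `σ = |θˢ|` is singular to `μ` and `e` is the
polar density of `θˢ`. -/
def IsRepr {α : Type*} [MeasurableSpace α] (μ : Measure α)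
    {d : ℕ} (θ : Fin d → SignedMeasure α)
    (g : α → Fin d → ℝ) (σ : Measure α) (e : α → Fin d → ℝ) : Prop :=
  Measurable g ∧ Measurable e ∧ (∀ i, Integrable (fun t => g t i) μ) ∧
    IsFiniteMeasure σ ∧ σ.MutuallySingular μ ∧
    (∀ᵐ t ∂σ, ∑ i, e t i ^ 2 = 1) ∧
    ∀ s : Set α, MeasurableSet s → ∀ i,
      θ i s = (∫ t in s, g t i ∂μ) + ∫ t in s, e t i ∂σ

/-- The value `J_f(θ) = ∫ f(dθᵃ/dμ) dμ + ∫ f^∞(dθˢ/d|θˢ|) d|θˢ|` computed from a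
representation of the Lebesgue decomposition. -/
noncomputable def Jval {α : Type*} [MeasurableSpace α] (μ : Measure α)
    {d : ℕ} (f : (Fin d → ℝ) → EReal) (u₀ : Fin d → ℝ)
    (g : α → Fin d → ℝ) (σ : Measure α) (e : α → Fin d → ℝ) : EReal :=
  eIntegral μ (fun t => f (g t)) + eIntegral σ (fun t => recFun f u₀ (e t))

/-!
Choose a measure `ν` that dominates the singular parts involved and is itself singular to `μ`. Since
`f^∞` is positively homogeneous, `∫ f^∞(dθˢ/d|θˢ|) d|θˢ| = ∫ f^∞(dθˢ/dν) dν`, so that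
`J_f(θ) = ∫ f(dθᵃ/dμ) dμ + ∫ f^∞(dθˢ/dν) dν`. The two densities are determined by `θ` almost
everywhere and depend linearly on `θ`, while `f` and `f^∞` are closed proper convex: they have
affine minorants, so the negative parts of both integrands are integrable, the extended integral is
additive, and the pointwise convexity inequality can be integrated.
-/

section ExtendedIntegral

lemma epos_coe (r : ℝ) : epos r = ENNReal.ofReal r := EReal.real_coe_toENNReal r

lemma epos_coe_mul {s : ℝ} (hs : 0 ≤ s) (x : EReal) :
    epos (s * x) = ENNReal.ofReal s * epos x :=
  EReal.toENNReal_mul (EReal.coe_nonneg.2 hs)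

lemma epos_neg_coe_mul {s : ℝ} (hs : 0 ≤ s) (x : EReal) :
    epos (-(s * x)) = ENNReal.ofReal s * epos (-x) := by
  rw [← mul_neg, epos_coe_mul hs]

lemma epos_mono : Monotone epos := fun _ _ => EReal.toENNReal_le_toENNReal

/-- The identity `(x + y)⁺ - (x + y)⁻ = (x⁺ - x⁻) + (y⁺ - y⁻)`, rearranged so that no subtraction
occurs. -/
lemma ofReal_add_ofReal_neg_add (x y : ℝ) :
    ENNReal.ofReal (x + y) + ENNReal.ofReal (-x) + ENNReal.ofReal (-y) =
      ENNReal.ofReal (-(x + y)) + ENNReal.ofReal x + ENNReal.ofReal y := by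
  simp only [ENNReal.ofReal, ← ENNReal.coe_add, ENNReal.coe_inj, ← NNReal.coe_inj,
    NNReal.coe_add, Real.coe_toNNReal']
  grind

lemma epos_add_add_epos_neg (x y : EReal) :
    epos (x + y) + epos (-x) + epos (-y) = epos (-(x + y)) + epos x + epos y := by
  induction x using EReal.rec <;> induction y using EReal.rec
  case coe.coe x y =>
    simpa only [← EReal.coe_add, ← EReal.coe_neg, epos_coe] using ofReal_add_ofReal_neg_add x y
  all_goals simp [epos]

lemma epos_neg_add_le (x y : EReal) : epos (-(x + y)) ≤ epos (-x) + epos (-y) := by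
  induction x using EReal.rec <;> induction y using EReal.rec
  case coe.coe x y =>
    rw [EReal.neg_add (by simp) (by simp)]
    exact EReal.toENNReal_add_le
  all_goals simp [epos]

lemma ennreal_sub_eq_sub_add_sub {p n p₁ n₁ p₂ n₂ : ℝ≥0∞} (hn : n ≠ ⊤) (hn₁ : n₁ ≠ ⊤)
    (hn₂ : n₂ ≠ ⊤) (h : p + n₁ + n₂ = n + p₁ + p₂) :
    (p : EReal) - n = (p₁ - n₁) + (p₂ - n₂) := by
  lift n to NNReal using hn
  lift n₁ to NNReal using hn₁
  lift n₂ to NNReal using hn₂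
  simp only [EReal.coe_nnreal_eq_coe_real]
  induction p <;> induction p₁ <;> induction p₂
  case coe.coe.coe p p₁ p₂ =>
    have hreal : (p : ℝ) + n₁ + n₂ = n + p₁ + p₂ := by exact_mod_cast h
    simp only [EReal.coe_nnreal_eq_coe_real]
    rw [← EReal.coe_sub, ← EReal.coe_sub, ← EReal.coe_sub, ← EReal.coe_add, EReal.coe_eq_coe_iff]
    linarith
  case top.coe.coe =>
    rw [top_add, top_add] at h
    norm_cast at h
  all_goals simp_all [EReal.coe_nnreal_eq_coe_real, ← EReal.coe_sub]

variable {α : Type*} [MeasurableSpace α] {μ ν σ : Measure α} {φ ψ : α → EReal}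

lemma eIntegral_of_lintegral_epos_neg_ne_top (h : ∫⁻ t, epos (-φ t) ∂μ ≠ ⊤) :
    eIntegral μ φ = ((∫⁻ t, epos (φ t) ∂μ : ℝ≥0∞) : EReal) - (∫⁻ t, epos (-φ t) ∂μ : ℝ≥0∞) := by
  rw [eIntegral]
  split_ifs with hP
  · lift ∫⁻ t, epos (-φ t) ∂μ to NNReal using h with n
    simp [hP]
  · rfl

lemma eIntegral_mono_ae_s11 (h : φ ≤ᵐ[μ] ψ) : eIntegral μ φ ≤ eIntegral μ ψ := by
  have hpos : ∫⁻ t, epos (φ t) ∂μ ≤ ∫⁻ t, epos (ψ t) ∂μ :=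
    lintegral_mono_ae (h.mono fun t ht => epos_mono ht)
  have hneg : ∫⁻ t, epos (-ψ t) ∂μ ≤ ∫⁻ t, epos (-φ t) ∂μ :=
    lintegral_mono_ae (h.mono fun t ht => epos_mono (EReal.neg_le_neg_iff.2 ht))
  rw [eIntegral, eIntegral]
  split_ifs with hφ hψ hψ
  · exact le_rfl
  · exact absurd (top_unique (hφ ▸ hpos)) hψ
  · exact le_top
  · exact EReal.sub_le_sub (EReal.coe_ennreal_le_coe_ennreal_iff.2 hpos)
      (EReal.coe_ennreal_le_coe_ennreal_iff.2 hneg)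

lemma eIntegral_congr_ae (h : φ =ᵐ[μ] ψ) : eIntegral μ φ = eIntegral μ ψ :=
  (eIntegral_mono_ae_s11 h.le).antisymm (eIntegral_mono_ae_s11 h.symm.le)

lemma eIntegral_const_mul {a : ℝ} (ha : 0 ≤ a) (φ : α → EReal) :
    eIntegral μ (fun t => a * φ t) = a * eIntegral μ φ := by
  simp only [eIntegral, epos_coe_mul ha, epos_neg_coe_mul ha,
    lintegral_const_mul' _ _ ENNReal.ofReal_ne_top]
  rcases ha.eq_or_lt with rfl | ha'
  · simp
  split_ifs with h₁ h₂ h₂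
  · rw [EReal.coe_mul_top_of_pos ha']
  · exact absurd h₁ (ENNReal.mul_ne_top ENNReal.ofReal_ne_top h₂)
  · exact absurd (by rw [h₂, ENNReal.mul_top (by simpa using ha')]) h₁
  · simp only [EReal.coe_ennreal_mul, EReal.coe_ennreal_ofReal, max_eq_left ha]
    rw [sub_eq_add_neg, sub_eq_add_neg, ← mul_neg,
      EReal.left_distrib_of_nonneg_of_ne_top (EReal.coe_nonneg.2 ha) (EReal.coe_ne_top a)]

lemma eIntegral_add (hφ : AEMeasurable φ μ) (hψ : AEMeasurable ψ μ)
    (hφneg : ∫⁻ t, epos (-φ t) ∂μ ≠ ⊤) (hψneg : ∫⁻ t, epos (-ψ t) ∂μ ≠ ⊤) :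
    eIntegral μ (fun t => φ t + ψ t) = eIntegral μ φ + eIntegral μ ψ := by
  have hpos {χ : α → EReal} (hχ : AEMeasurable χ μ) : AEMeasurable (fun t => epos (χ t)) μ :=
    hχ.ereal_toENNReal
  have hneg {χ : α → EReal} (hχ : AEMeasurable χ μ) : AEMeasurable (fun t => epos (-χ t)) μ :=
    hpos hχ.neg
  have hsum : ∫⁻ t, epos (-(φ t + ψ t)) ∂μ ≠ ⊤ := by
    refine ne_top_of_le_ne_top (ENNReal.add_ne_top.2 ⟨hφneg, hψneg⟩) ?_
    rw [← lintegral_add_left' (hneg hφ)]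
    exact lintegral_mono fun t => epos_neg_add_le _ _
  rw [eIntegral_of_lintegral_epos_neg_ne_top hsum, eIntegral_of_lintegral_epos_neg_ne_top hφneg,
    eIntegral_of_lintegral_epos_neg_ne_top hψneg]
  refine ennreal_sub_eq_sub_add_sub hsum hφneg hψneg ?_
  rw [← lintegral_add_right' _ (hneg hφ), ← lintegral_add_right' _ (hneg hψ),
    ← lintegral_add_right' _ (hpos hφ), ← lintegral_add_right' _ (hpos hψ)]
  exact lintegral_congr fun t => epos_add_add_epos_neg _ _

lemma lintegral_epos_neg_ne_top_of_le {m : α → ℝ} (hm : Integrable m μ)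
    (hle : ∀ t, (m t : EReal) ≤ φ t) : ∫⁻ t, epos (-φ t) ∂μ ≠ ⊤ := by
  refine ne_top_of_le_ne_top hm.neg.lintegral_lt_top.ne (lintegral_mono fun t => ?_)
  exact epos_mono (EReal.neg_le_neg_iff.2 (hle t))

lemma lintegral_ofReal_toReal_rnDeriv_mul [SigmaFinite σ] [σ.HaveLebesgueDecomposition ν]
    (hσν : σ ≪ ν) (F : α → ℝ≥0∞) :
    ∫⁻ t, ENNReal.ofReal (σ.rnDeriv ν t).toReal * F t ∂ν = ∫⁻ t, F t ∂σ := by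
  calc ∫⁻ t, ENNReal.ofReal (σ.rnDeriv ν t).toReal * F t ∂ν
      = ∫⁻ t, σ.rnDeriv ν t * F t ∂ν := by
        refine lintegral_congr_ae ?_
        filter_upwards [σ.rnDeriv_lt_top ν] with t ht
        rw [ENNReal.ofReal_toReal ht.ne]
    _ = ∫⁻ t, F t ∂ν.withDensity (σ.rnDeriv ν) :=
        (lintegral_withDensity_eq_lintegral_mul_non_measurable ν (σ.measurable_rnDeriv ν)
          (σ.rnDeriv_lt_top ν) F).symm
    _ = ∫⁻ t, F t ∂σ := by rw [Measure.withDensity_rnDeriv_eq σ ν hσν]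

lemma eIntegral_rnDeriv_mul [SigmaFinite σ] [σ.HaveLebesgueDecomposition ν] (hσν : σ ≪ ν)
    (φ : α → EReal) :
    eIntegral ν (fun t => ((σ.rnDeriv ν t).toReal : EReal) * φ t) = eIntegral σ φ := by
  simp only [eIntegral, epos_coe_mul ENNReal.toReal_nonneg, epos_neg_coe_mul ENNReal.toReal_nonneg,
    lintegral_ofReal_toReal_rnDeriv_mul hσν]

end ExtendedIntegral

/-- Closed proper convex functions, i.e. lower semicontinuous convex functions that never take the
value `-∞` and are not identically `+∞`. The convention `0 * ⊤ = 0` in `EReal`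
keeps the inequality valid at the endpoints of a segment. -/
structure IsClosedProperConvex {E : Type*} [TopologicalSpace E] [AddCommMonoid E] [SMul ℝ E]
    (φ : E → EReal) : Prop where
  lowerSemicontinuous : LowerSemicontinuous φ
  map_combination_le : ∀ x y : E, ∀ a b : ℝ, 0 ≤ a → 0 ≤ b → a + b = 1 →
    φ (a • x + b • y) ≤ (a : EReal) * φ x + (b : EReal) * φ y
  ne_bot : ∀ x, φ x ≠ ⊥
  exists_ne_top : ∃ x, φ x ≠ ⊤

section AffineMinorant

variable {E : Type*} [TopologicalSpace E] [AddCommGroup E] [Module ℝ E] {φ : E → EReal}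

namespace IsClosedProperConvex

lemma convex_epigraph (hφ : IsClosedProperConvex φ) :
    Convex ℝ {p : E × ℝ | φ p.1 ≤ (p.2 : EReal)} := by
  intro p hp q hq a b ha hb hab
  refine (hφ.map_combination_le p.1 q.1 a b ha hb hab).trans ?_
  simp only [Prod.snd_add, Prod.smul_snd, smul_eq_mul, EReal.coe_add, EReal.coe_mul]
  have := EReal.coe_nonneg.2 ha
  have := EReal.coe_nonneg.2 hb
  gcongr
  exacts [hp, hq]

lemma isClosed_epigraph (hφ : IsClosedProperConvex φ) :
    IsClosed {p : E × ℝ | φ p.1 ≤ (p.2 : EReal)} :=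
  hφ.lowerSemicontinuous.isClosed_epigraph.preimage
    (continuous_fst.prodMk (continuous_coe_real_ereal.comp continuous_snd))

/-- The minorant is the hyperplane separating the epigraph from a point just below its graph. -/
lemma exists_affine_minorant [IsTopologicalAddGroup E] [ContinuousSMul ℝ E]
    [LocallyConvexSpace ℝ E] (hφ : IsClosedProperConvex φ) :
    ∃ (A : E →L[ℝ] ℝ) (β : ℝ), ∀ x, ((A x + β : ℝ) : EReal) ≤ φ x := by
  obtain ⟨x₀, hx₀⟩ := hφ.exists_ne_top
  obtain ⟨c, hc⟩ : ∃ c : ℝ, φ x₀ = c := ⟨_, (EReal.coe_toReal hx₀ (hφ.ne_bot x₀)).symm⟩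
  have hbelow : (x₀, c - 1) ∉ {p : E × ℝ | φ p.1 ≤ (p.2 : EReal)} := by
    simp only [mem_ofPred_eq, hc, EReal.coe_le_coe_iff]
    linarith
  obtain ⟨L, s, hs, hL⟩ :=
    geometric_hahn_banach_point_closed hφ.convex_epigraph hφ.isClosed_epigraph hbelow
  have hsplit (x : E) (r : ℝ) : L (x, r) = L (x, 0) + r * L (0, 1) := by
    rw [← smul_eq_mul, ← map_smul, ← map_add]
    simp
  have habove := hL (x₀, c) (by simp [hc])
  rw [hsplit] at hs habove
  have hslope : 0 < L (0, 1) := by nlinarith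
  refine ⟨-((L (0, 1))⁻¹ • L.comp (ContinuousLinearMap.inl ℝ E ℝ)), (L (0, 1))⁻¹ * s,
    fun x => le_of_not_gt fun hlt => ?_⟩
  obtain ⟨r, hr, hr'⟩ := EReal.lt_iff_exists_real_btwn.1 hlt
  have hxr := hL (x, r) hr.le
  rw [hsplit] at hxr
  simp only [EReal.coe_lt_coe_iff, neg_apply, smul_apply, ContinuousLinearMap.comp_apply,
    ContinuousLinearMap.inl_apply, smul_eq_mul] at hr'
  have hlt_s : r * L (0, 1) < s - L (x, 0) := by
    calc r * L (0, 1) < (-((L (0, 1))⁻¹ * L (x, 0)) + (L (0, 1))⁻¹ * s) * L (0, 1) := by gcongr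
      _ = s - L (x, 0) := by field_simp; ring
  linarith

end IsClosedProperConvex

end AffineMinorant

section IntegralFunctional

variable {α E : Type*} [MeasurableSpace α] {ν : Measure α} [IsFiniteMeasure ν]
  [NormedAddCommGroup E] [NormedSpace ℝ E]
  {φ : E → EReal} {u v : α → E}

namespace IsClosedProperConvex

lemma lintegral_epos_neg_comp_ne_top (hφ : IsClosedProperConvex φ) (hu : Integrable u ν) :
    ∫⁻ t, epos (-φ (u t)) ∂ν ≠ ⊤ := by
  obtain ⟨A, β, hA⟩ := hφ.exists_affine_minorant
  exact lintegral_epos_neg_ne_top_of_le ((A.integrable_comp hu).add (integrable_const β))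
    fun t => hA (u t)

theorem eIntegral_comp_combination_le [MeasurableSpace E] [BorelSpace E]
    (hφ : IsClosedProperConvex φ) (hu : Integrable u ν)
    (hv : Integrable v ν) {a b : ℝ} (ha : 0 ≤ a) (hb : 0 ≤ b) (hab : a + b = 1) :
    eIntegral ν (fun t => φ (a • u t + b • v t)) ≤
      a * eIntegral ν (fun t => φ (u t)) + b * eIntegral ν (fun t => φ (v t)) := by
  have hmeas {c : ℝ} {w : α → E} (hw : Integrable w ν) :
      AEMeasurable (fun t => (c : EReal) * φ (w t)) ν :=
    (hφ.lowerSemicontinuous.measurable.comp_aemeasurable hw.aemeasurable).const_mul _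
  have hneg {c : ℝ} (hc : 0 ≤ c) {w : α → E} (hw : Integrable w ν) :
      ∫⁻ t, epos (-((c : EReal) * φ (w t))) ∂ν ≠ ⊤ := by
    simp only [epos_neg_coe_mul hc, lintegral_const_mul' _ _ ENNReal.ofReal_ne_top]
    exact ENNReal.mul_ne_top ENNReal.ofReal_ne_top (hφ.lintegral_epos_neg_comp_ne_top hw)
  calc eIntegral ν (fun t => φ (a • u t + b • v t))
      ≤ eIntegral ν (fun t => a * φ (u t) + b * φ (v t)) :=
        eIntegral_mono_ae_s11 (.of_forall fun t => hφ.map_combination_le _ _ a b ha hb hab)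
    _ = a * eIntegral ν (fun t => φ (u t)) + b * eIntegral ν (fun t => φ (v t)) := by
        rw [eIntegral_add (hmeas hu) (hmeas hv) (hneg ha hu) (hneg hb hv),
          eIntegral_const_mul ha, eIntegral_const_mul hb]

end IsClosedProperConvex

end IntegralFunctional

/-- The difference quotient `(f (u₀ + s u) - f u₀) / s`, whose supremum over `s > 0` is the
recession function `recFun f u₀`. -/
noncomputable def diffQuot {E : Type*} [AddCommMonoid E] [SMul ℝ E]
    (f : E → EReal) (u₀ : E) (s : ℝ) (u : E) : EReal :=
  (f (u₀ + s • u) - f u₀) * ((s⁻¹ : ℝ) : EReal)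

section Recession

lemma combination_sub_coe_mul_coe {a b k : ℝ} (ha : 0 ≤ a) (hb : 0 ≤ b) (hab : a + b = 1)
    (hk : 0 ≤ k) (x y : EReal) (c : ℝ) :
    (a * x + b * y - c) * k = a * ((x - c) * k) + b * ((y - c) * (k : EReal)) := by
  have hdist {r : ℝ} (hr : 0 ≤ r) (x y : EReal) : (r : EReal) * (x + y) = r * x + r * y :=
    EReal.left_distrib_of_nonneg_of_ne_top (EReal.coe_nonneg.2 hr) (EReal.coe_ne_top r) x y
  have hc : (a : EReal) * -c + b * -c = -c := by
    norm_cast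
    rw [← add_mul, hab, one_mul]
  simp only [sub_eq_add_neg, mul_comm _ (k : EReal)]
  calc (k : EReal) * (a * x + b * y + -c)
      = k * (a * (x + -c) + b * (y + -c)) := by
        rw [hdist ha, hdist hb, add_add_add_comm, hc]
    _ = a * (k * (x + -c)) + b * (k * (y + -c)) := by
        rw [hdist hk, mul_left_comm, mul_left_comm (k : EReal) b]

lemma continuous_sub_coe_mul_coe (c : ℝ) {k : ℝ} (hk : k ≠ 0) :
    Continuous fun x : EReal => (x - c) * k := by
  have hsub : Continuous fun x : EReal => x - c := continuous_iff_continuousAt.2 fun x => by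
    simp only [sub_eq_add_neg]
    exact (EReal.continuousAt_add (p := (x, -(c : EReal))) (by simp) (by simp)).comp
      (f := fun x => (x, -(c : EReal))) (by fun_prop)
  have hmul : Continuous fun x : EReal => x * k := continuous_iff_continuousAt.2 fun x =>
    (EReal.continuousAt_mul (p := (x, (k : EReal))) (by simp) (by simp) (by simp [hk])
      (by simp [hk])).comp (f := fun x => (x, (k : EReal))) (by fun_prop)
  exact hmul.comp hsub

section Algebra

variable {E : Type*} [AddCommMonoid E] [Module ℝ E] {f : E → EReal} {u₀ : E}

lemma diffQuot_le_recFun (f : E → EReal) (u₀ u : E) {s : ℝ} (hs : 0 < s) :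
    diffQuot f u₀ s u ≤ recFun f u₀ u :=
  le_iSup (fun s : {s : ℝ // 0 < s} => diffQuot f u₀ s u) ⟨s, hs⟩

lemma recFun_le {u : E} {B : EReal} (h : ∀ s, 0 < s → diffQuot f u₀ s u ≤ B) :
    recFun f u₀ u ≤ B :=
  iSup_le fun s => h s s.2

lemma diffQuot_smul (f : E → EReal) (u₀ u : E) {r s : ℝ} (hr : 0 < r) :
    diffQuot f u₀ s (r • u) = r * diffQuot f u₀ (s * r) u := by
  have hinv : (s⁻¹ : ℝ) = r * (s * r)⁻¹ := by field_simp
  rw [diffQuot, diffQuot, hinv, EReal.coe_mul, mul_smul, mul_left_comm]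

lemma recFun_zero (hbot : f u₀ ≠ ⊥) (htop : f u₀ ≠ ⊤) : recFun f u₀ 0 = 0 := by
  have hquot (s : ℝ) : diffQuot f u₀ s 0 = 0 := by
    simp [diffQuot, EReal.sub_self htop hbot]
  exact le_antisymm (recFun_le fun s _ => (hquot s).le)
    ((hquot 1).symm.trans_le (diffQuot_le_recFun f u₀ 0 one_pos))

lemma recFun_smul_le {r : ℝ} (hr : 0 < r) (u : E) :
    recFun f u₀ (r • u) ≤ r * recFun f u₀ u := by
  refine recFun_le fun s hs => ?_
  rw [diffQuot_smul f u₀ u hr]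
  have := EReal.coe_nonneg.2 hr.le
  gcongr
  exact diffQuot_le_recFun f u₀ u (mul_pos hs hr)

lemma recFun_smul (hbot : f u₀ ≠ ⊥) (htop : f u₀ ≠ ⊤) {r : ℝ} (hr : 0 ≤ r) (u : E) :
    recFun f u₀ (r • u) = r * recFun f u₀ u := by
  rcases hr.eq_or_lt with rfl | hr'
  · simp [recFun_zero hbot htop]
  refine le_antisymm (recFun_smul_le hr' u) ?_
  have := EReal.coe_nonneg.2 hr
  calc (r : EReal) * recFun f u₀ u = r * recFun f u₀ (r⁻¹ • r • u) := by
        rw [inv_smul_smul₀ hr'.ne']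
    _ ≤ r * ((r⁻¹ : ℝ) * recFun f u₀ (r • u)) := by
        gcongr
        exact recFun_smul_le (inv_pos.2 hr') _
    _ = recFun f u₀ (r • u) := by
        rw [← mul_assoc, ← EReal.coe_mul, mul_inv_cancel₀ hr'.ne', EReal.coe_one, one_mul]

end Algebra

namespace IsClosedProperConvex

variable {E : Type*} [TopologicalSpace E] [AddCommMonoid E] [Module ℝ E] {f : E → EReal} {u₀ : E}

lemma diffQuot_combination_le (hf : IsClosedProperConvex f) (hu₀ : f u₀ ≠ ⊤) {s : ℝ} (hs : 0 < s)
    (x y : E) {a b : ℝ} (ha : 0 ≤ a) (hb : 0 ≤ b) (hab : a + b = 1) :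
    diffQuot f u₀ s (a • x + b • y) ≤ a * diffQuot f u₀ s x + b * diffQuot f u₀ s y := by
  have hpt : u₀ + s • (a • x + b • y) = a • (u₀ + s • x) + b • (u₀ + s • y) := by
    nth_rewrite 1 [← one_smul ℝ u₀]
    rw [← hab]
    module
  have hinv := inv_nonneg.2 hs.le
  have := EReal.coe_nonneg.2 hinv
  simp only [diffQuot]
  lift f u₀ to ℝ using ⟨hu₀, hf.ne_bot u₀⟩ with c
  rw [hpt, ← combination_sub_coe_mul_coe ha hb hab hinv]
  gcongr
  exact EReal.sub_le_sub (hf.map_combination_le _ _ a b ha hb hab) le_rfl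

lemma lowerSemicontinuous_diffQuot [ContinuousAdd E] [ContinuousConstSMul ℝ E]
    (hf : IsClosedProperConvex f) (hu₀ : f u₀ ≠ ⊤)
    {s : ℝ} (hs : 0 < s) : LowerSemicontinuous (diffQuot f u₀ s) := by
  unfold diffQuot
  lift f u₀ to ℝ using ⟨hu₀, hf.ne_bot u₀⟩ with c
  exact (continuous_sub_coe_mul_coe c (inv_pos.2 hs).ne').comp_lowerSemicontinuous
    (hf.lowerSemicontinuous.comp (f := f) (g := fun u => u₀ + s • u) (by fun_prop))
    fun x y hxy => mul_le_mul_of_nonneg_right (EReal.sub_le_sub hxy le_rfl)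
      (EReal.coe_nonneg.2 (inv_pos.2 hs).le)

protected theorem recFun [ContinuousAdd E] [ContinuousConstSMul ℝ E]
    (hf : IsClosedProperConvex f) (hu₀ : f u₀ ≠ ⊤) : IsClosedProperConvex (recFun f u₀) where
  lowerSemicontinuous := lowerSemicontinuous_iSup fun s : {s : ℝ // 0 < s} =>
    hf.lowerSemicontinuous_diffQuot hu₀ s.2
  map_combination_le x y a b ha hb hab := by
    have := EReal.coe_nonneg.2 ha
    have := EReal.coe_nonneg.2 hb
    refine recFun_le fun s hs => (hf.diffQuot_combination_le hu₀ hs x y ha hb hab).trans ?_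
    gcongr <;> exact diffQuot_le_recFun f u₀ _ hs
  ne_bot u := by
    refine ne_bot_of_le_ne_bot ?_ (diffQuot_le_recFun f u₀ u one_pos)
    simp [diffQuot, sub_eq_add_neg, EReal.add_eq_bot_iff, hf.ne_bot, hu₀]
  exists_ne_top := ⟨0, by simp [recFun_zero (hf.ne_bot u₀) hu₀]⟩

end IsClosedProperConvex

end Recession

/-- The set function `θ` splits as `θ = g μ + w ν`; when `ν` is singular to `μ`, the functions `g`
and `w` are the densities of the absolutely continuous and of the singular part of `θ`. -/
structure HasDensities {α E : Type*} [MeasurableSpace α] [NormedAddCommGroup E] [NormedSpace ℝ E]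
    (μ ν : Measure α) (θ : Set α → E) (g w : α → E) : Prop where
  integrable_left : Integrable g μ
  integrable_right : Integrable w ν
  apply_eq : ∀ s, MeasurableSet s → θ s = ∫ t in s, g t ∂μ + ∫ t in s, w t ∂ν

/-- The density `d(eσ)/dν` of the vector measure with polar decomposition `e σ` with respect to a
measure `ν` dominating `σ`. -/
noncomputable def polarDensity {α E : Type*} [MeasurableSpace α] [SMul ℝ E]
    (σ ν : Measure α) (e : α → E) (t : α) : E :=
  (σ.rnDeriv ν t).toReal • e t

section Densities

variable {α E : Type*} [MeasurableSpace α] [NormedAddCommGroup E] [NormedSpace ℝ E]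
  {μ ν : Measure α}

namespace HasDensities

variable {θ θ₁ θ₂ : Set α → E} {g w g₁ w₁ g₂ w₂ : α → E}

lemma symm (h : HasDensities μ ν θ g w) : HasDensities ν μ θ w g :=
  ⟨h.integrable_right, h.integrable_left, fun s hs => (h.apply_eq s hs).trans (add_comm _ _)⟩

lemma combination (h₁ : HasDensities μ ν θ₁ g₁ w₁) (h₂ : HasDensities μ ν θ₂ g₂ w₂) (a b : ℝ) :
    HasDensities μ ν (fun s => a • θ₁ s + b • θ₂ s) (fun t => a • g₁ t + b • g₂ t)
      (fun t => a • w₁ t + b • w₂ t) where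
  integrable_left := (h₁.integrable_left.smul a).add (h₂.integrable_left.smul b)
  integrable_right := (h₁.integrable_right.smul a).add (h₂.integrable_right.smul b)
  apply_eq s hs := by
    have hadd {η : Measure α} {k₁ k₂ : α → E} (hk₁ : Integrable k₁ η) (hk₂ : Integrable k₂ η) :
        ∫ t in s, (a • k₁ t + b • k₂ t) ∂η = a • ∫ t in s, k₁ t ∂η + b • ∫ t in s, k₂ t ∂η := by
      rw [integral_add (f := fun t => a • k₁ t) (g := fun t => b • k₂ t)
        (hk₁.smul a).integrableOn (hk₂.smul b).integrableOn, integral_smul, integral_smul]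
    rw [hadd h₁.integrable_left h₂.integrable_left, hadd h₁.integrable_right h₂.integrable_right,
      h₁.apply_eq s hs, h₂.apply_eq s hs]
    module

lemma setIntegral_left (h : HasDensities μ ν θ g w) {T : Set α} (hT : MeasurableSet T)
    (hνT : ν T = 0) (hμT : μ Tᶜ = 0) {s : Set α} (hs : MeasurableSet s) :
    ∫ t in s, g t ∂μ = θ (s ∩ T) := by
  rw [h.apply_eq _ (hs.inter hT),
    setIntegral_measure_zero w (measure_mono_null inter_subset_right hνT), add_zero]
  exact setIntegral_congr_set (inter_ae_eq_left_of_ae_eq_univ (ae_eq_univ.2 hμT)).symm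

lemma ae_eq_left [CompleteSpace E] (hνμ : ν ⟂ₘ μ) (h₁ : HasDensities μ ν θ g₁ w₁)
    (h₂ : HasDensities μ ν θ g₂ w₂) : g₁ =ᵐ[μ] g₂ := by
  obtain ⟨T, hT, hνT, hμT⟩ := hνμ
  refine Integrable.ae_eq_of_forall_setIntegral_eq _ _ h₁.integrable_left h₂.integrable_left
    fun s hs _ => ?_
  rw [h₁.setIntegral_left hT hνT hμT hs, h₂.setIntegral_left hT hνT hμT hs]

lemma ae_eq_right [CompleteSpace E] (hνμ : ν ⟂ₘ μ) (h₁ : HasDensities μ ν θ g₁ w₁)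
    (h₂ : HasDensities μ ν θ g₂ w₂) : w₁ =ᵐ[ν] w₂ :=
  h₁.symm.ae_eq_left hνμ.symm h₂.symm

end HasDensities

lemma eIntegral_comp_polarDensity {σ : Measure α} [SigmaFinite σ]
    [σ.HaveLebesgueDecomposition ν] (hσν : σ ≪ ν) {φ : E → EReal}
    (hφ : ∀ r : ℝ, 0 ≤ r → ∀ u, φ (r • u) = r * φ u) (e : α → E) :
    eIntegral ν (fun t => φ (polarDensity σ ν e t)) = eIntegral σ (fun t => φ (e t)) := by
  simp only [polarDensity, hφ _ ENNReal.toReal_nonneg]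
  exact eIntegral_rnDeriv_mul hσν _

end Densities

section Functional

variable {α : Type*} [MeasurableSpace α] {μ ν : Measure α} {d : ℕ} {f : (Fin d → ℝ) → EReal}
  {u₀ : Fin d → ℝ}

namespace IsRepr

variable {θ : Fin d → SignedMeasure α} {g : α → Fin d → ℝ} {σ : Measure α} {e : α → Fin d → ℝ}

lemma isFiniteMeasure (h : IsRepr μ θ g σ e) : IsFiniteMeasure σ := h.2.2.2.1

lemma mutuallySingular (h : IsRepr μ θ g σ e) : σ ⟂ₘ μ := h.2.2.2.2.1

lemma integrable_polar (h : IsRepr μ θ g σ e) (i : Fin d) : Integrable (fun t => e t i) σ := by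
  have := h.isFiniteMeasure
  obtain ⟨-, he, -, -, -, hnorm, -⟩ := h
  refine Integrable.of_bound (measurable_pi_iff.1 he i).aestronglyMeasurable 1 ?_
  filter_upwards [hnorm] with t ht
  rw [Real.norm_eq_abs, ← sq_le_one_iff_abs_le_one, ← ht]
  exact Finset.single_le_sum (f := fun j => e t j ^ 2) (fun j _ => sq_nonneg _) (Finset.mem_univ i)

lemma hasDensities [SigmaFinite ν] (h : IsRepr μ θ g σ e) (hσν : σ ≪ ν) :
    HasDensities μ ν (fun s i => θ i s) g (polarDensity σ ν e) := by
  have := h.isFiniteMeasure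
  have he := h.integrable_polar
  obtain ⟨-, -, hg, -, -, -, hθ⟩ := h
  refine ⟨.of_eval hg, (integrable_rnDeriv_smul_iff hσν).2 (.of_eval he), fun s hs => ?_⟩
  ext i
  simp only [polarDensity]
  rw [setIntegral_rnDeriv_smul hσν hs, hθ s hs i, Pi.add_apply,
    eval_integral fun i => (hg i).integrableOn, eval_integral fun i => (he i).integrableOn]

/-- Positive homogeneity of the recession function absorbs the density of `σ` with respect to `ν`,
so the singular term does not see which dominating measure is used. -/
lemma Jval_eq [SigmaFinite ν] (h : IsRepr μ θ g σ e) (hσν : σ ≪ ν) (hνμ : ν ⟂ₘ μ)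
    (hbot : f u₀ ≠ ⊥) (htop : f u₀ ≠ ⊤) {g' w : α → Fin d → ℝ}
    (h' : HasDensities μ ν (fun s i => θ i s) g' w) :
    Jval μ f u₀ g σ e = Jval μ f u₀ g' ν w := by
  have := h.isFiniteMeasure
  have hdens := h.hasDensities hσν
  rw [Jval, Jval, ← eIntegral_comp_polarDensity hσν (fun r hr => recFun_smul hbot htop hr) e]
  congr 1
  · exact eIntegral_congr_ae ((hdens.ae_eq_left hνμ h').fun_comp f)
  · exact eIntegral_congr_ae ((hdens.ae_eq_right hνμ h').fun_comp (recFun f u₀))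

theorem Jval_unique (hbot : f u₀ ≠ ⊥) (htop : f u₀ ≠ ⊤) {g' : α → Fin d → ℝ}
    {σ' : Measure α} {e' : α → Fin d → ℝ} (h : IsRepr μ θ g σ e) (h' : IsRepr μ θ g' σ' e') :
    Jval μ f u₀ g σ e = Jval μ f u₀ g' σ' e' := by
  have := h.isFiniteMeasure
  have := h'.isFiniteMeasure
  have hσ : σ ≪ σ + σ' := .add_right .rfl σ'
  have hσ' : σ' ≪ σ + σ' := .add_right' .rfl σ
  have hsing : σ + σ' ⟂ₘ μ := h.mutuallySingular.add_left h'.mutuallySingular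
  have hdens := h.hasDensities hσ
  exact (h.Jval_eq hσ hsing hbot htop hdens).trans (h'.Jval_eq hσ' hsing hbot htop hdens).symm

end IsRepr

lemma IsClosedProperConvex.Jval_combination_le [IsFiniteMeasure μ] [IsFiniteMeasure ν]
    (hf : IsClosedProperConvex f) (hu₀ : f u₀ ≠ ⊤) {g₁ g₂ w₁ w₂ : α → Fin d → ℝ}
    (hg₁ : Integrable g₁ μ) (hg₂ : Integrable g₂ μ) (hw₁ : Integrable w₁ ν)
    (hw₂ : Integrable w₂ ν) {a b : ℝ} (ha : 0 ≤ a) (hb : 0 ≤ b)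
    (hab : a + b = 1) :
    Jval μ f u₀ (fun t => a • g₁ t + b • g₂ t) ν (fun t => a • w₁ t + b • w₂ t) ≤
      a * Jval μ f u₀ g₁ ν w₁ + b * Jval μ f u₀ g₂ ν w₂ := by
  simp only [Jval]
  rw [EReal.left_distrib_of_nonneg_of_ne_top (EReal.coe_nonneg.2 ha) (EReal.coe_ne_top a),
    EReal.left_distrib_of_nonneg_of_ne_top (EReal.coe_nonneg.2 hb) (EReal.coe_ne_top b),
    add_add_add_comm]
  exact add_le_add (hf.eIntegral_comp_combination_le hg₁ hg₂ ha hb hab)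
    ((hf.recFun hu₀).eIntegral_comp_combination_le hw₁ hw₂ ha hb hab)

theorem IsRepr.Jval_combination_le [IsFiniteMeasure μ] (hf : IsClosedProperConvex f)
    (hu₀ : f u₀ ≠ ⊤) {θ₁ θ₂ : Fin d → SignedMeasure α} {a b : ℝ} (ha : 0 ≤ a) (hb : 0 ≤ b)
    (hab : a + b = 1) {g₁ g₂ g₃ : α → Fin d → ℝ} {σ₁ σ₂ σ₃ : Measure α} {e₁ e₂ e₃ : α → Fin d → ℝ}
    (h₁ : IsRepr μ θ₁ g₁ σ₁ e₁) (h₂ : IsRepr μ θ₂ g₂ σ₂ e₂)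
    (h₃ : IsRepr μ (a • θ₁ + b • θ₂) g₃ σ₃ e₃) :
    Jval μ f u₀ g₃ σ₃ e₃ ≤ a * Jval μ f u₀ g₁ σ₁ e₁ + b * Jval μ f u₀ g₂ σ₂ e₂ := by
  have := h₁.isFiniteMeasure
  have := h₂.isFiniteMeasure
  have := h₃.isFiniteMeasure
  let ν := σ₁ + σ₂ + σ₃
  have hν₁ : σ₁ ≪ ν := .add_right (.add_right .rfl σ₂) σ₃
  have hν₂ : σ₂ ≪ ν := .add_right (.add_right' .rfl σ₁) σ₃
  have hν₃ : σ₃ ≪ ν := .add_right' .rfl (σ₁ + σ₂)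
  have hνμ : ν ⟂ₘ μ :=
    (h₁.mutuallySingular.add_left h₂.mutuallySingular).add_left h₃.mutuallySingular
  have hd₁ := h₁.hasDensities hν₁
  have hd₂ := h₂.hasDensities hν₂
  rw [h₁.Jval_eq hν₁ hνμ (hf.ne_bot u₀) hu₀ hd₁, h₂.Jval_eq hν₂ hνμ (hf.ne_bot u₀) hu₀ hd₂,
    h₃.Jval_eq hν₃ hνμ (hf.ne_bot u₀) hu₀ (hd₁.combination hd₂ a b)]
  exact hf.Jval_combination_le hu₀ hd₁.integrable_left hd₂.integrable_left
    hd₁.integrable_right hd₂.integrable_right ha hb hab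

end Functional

/-- The functional `J_f` is well defined (independent of the choice of densities in the
Lebesgue decomposition) and convex in `θ`. -/
theorem Jf_well_defined_and_convex
    {α : Type*} [MeasurableSpace α] (μ : Measure α) [IsFiniteMeasure μ]
    {d : ℕ} (f : (Fin d → ℝ) → EReal)
    (hlsc : LowerSemicontinuous f)
    (hcvx : ∀ x y : Fin d → ℝ, ∀ a b : ℝ, 0 ≤ a → 0 ≤ b → a + b = 1 →
      f (a • x + b • y) ≤ (a : EReal) * f x + (b : EReal) * f y)
    (hproper₁ : ∀ x, f x ≠ ⊥)
    (u₀ : Fin d → ℝ) (hu₀ : f u₀ ≠ ⊤) :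
    -- well-definedness: any two representations of θ give the same value
    (∀ (θ : Fin d → SignedMeasure α) g σ e g' σ' e',
      IsRepr μ θ g σ e → IsRepr μ θ g' σ' e' →
        Jval μ f u₀ g σ e = Jval μ f u₀ g' σ' e') ∧
    -- convexity in θ
    (∀ (θ₁ θ₂ : Fin d → SignedMeasure α) (lam : ℝ), 0 ≤ lam → lam ≤ 1 →
      ∀ g₁ σ₁ e₁ g₂ σ₂ e₂ g₃ σ₃ e₃,
        IsRepr μ θ₁ g₁ σ₁ e₁ → IsRepr μ θ₂ g₂ σ₂ e₂ →
        IsRepr μ (lam • θ₁ + (1 - lam) • θ₂) g₃ σ₃ e₃ →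
          Jval μ f u₀ g₃ σ₃ e₃ ≤
            (lam : EReal) * Jval μ f u₀ g₁ σ₁ e₁ +
              ((1 - lam : ℝ) : EReal) * Jval μ f u₀ g₂ σ₂ e₂) := by
  have hf : IsClosedProperConvex f := ⟨hlsc, hcvx, hproper₁, u₀, hu₀⟩
  exact ⟨fun θ g σ e g' σ' e' h h' => h.Jval_unique (hproper₁ u₀) hu₀ h',
    fun θ₁ θ₂ lam h₀ h₁ g₁ σ₁ e₁ g₂ σ₂ e₂ g₃ σ₃ e₃ =>
      IsRepr.Jval_combination_le hf hu₀ h₀ (sub_nonneg.2 h₁) (add_sub_cancel lam 1)⟩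
end
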